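/- Tangency in the general case: (i) for every k ∈ ℤ∖{n}, Γ_k(t) = Γ_k^{(0)} + O(t) and Γ̃_k(t) = Γ̃_k^{(0)} + O(t) (no poles). (ii) Γ_n(t) = (a_{n+1}²/(a_−(a_{n−1} − a_{n+1})² t²))·(Γ_{n−1}^{(0)} − a_{n−1}² Γ̃_{n−1}^{(0)}) + Γ_n^{(−1)}/t + O(1) and Γ̃_n(t) = (a_{n+1}a_{n−1}/(a_−(a_{n−1} − a_{n+1})² t²))·(Γ_{n−1}^{(0)}/a_{n−1}² − Γ̃_{n−1}^{(0)}) + Γ̃_n^{(−1)}/t + O(1), where Γ_n^{(−1)} and Γ̃_n^{(−1)} are F-linear combinations of Γ_{n+1}^{(0)}, Γ_{n−1}^{(0)}, Γ̃_{n+1}^{(0)}, Γ̃_{n−1}^{(0)}. (iii) Moreover a_−(Γ̃_{n+1}^{(0)} − Γ_{n+1}^{(0)}/a_{n+1}²) = a_+(Γ_{n−1}^{(0)}/a_{n−1}² − Γ̃_{n−1}^{(0)}). -/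

import Mathlib

/-!
Common definitions: the matrices `L₁`, `L₂` of the Toeplitz lattice, their powers,
the recursion polynomials `Γ_k` (here `GamA`), `Γ̃_k` (here `GamB`) and their
self-dual version (`GamSD`), together with the notion of formal Laurent
solutions of the (self-dual) Toeplitz lattice.
-/

noncomputable section

namespace SingConf

variable {A : Type*} [CommRing A]

/-- The entry `(L₁)_{ij} = -x_i y_{j-1} + δ_{i+1,j}` (for `j - i ≤ 1`, zero otherwise). -/
def L1e (x y : ℤ → A) (i j : ℤ) : A :=
  if j ≤ i + 1 then -(x i * y (j - 1)) + (if i + 1 = j then 1 else 0) else 0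

/-- The entry `(L₂)_{ij} = -y_j x_{i-1} + δ_{j+1,i}` (for `j - i ≥ -1`, zero otherwise). -/
def L2e (x y : ℤ → A) (i j : ℤ) : A :=
  if i ≤ j + 1 then -(y j * x (i - 1)) + (if j + 1 = i then 1 else 0) else 0

/-- The entry `(L₁^s)_{ij}`; the matrix `L₁` has upper bandwidth 1, so each entry of a
power is a finite sum. -/
def L1pow (x y : ℤ → A) : ℕ → ℤ → ℤ → A
  | 0 => fun i j => if i = j then 1 else 0
  | s + 1 => fun i j => ∑ l ∈ Finset.Icc (j - 1) (i + (s : ℤ)), L1pow x y s i l * L1e x y l j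

/-- The entry `(L₂^s)_{ij}`. -/
def L2pow (x y : ℤ → A) : ℕ → ℤ → ℤ → A
  | 0 => fun i j => if i = j then 1 else 0
  | s + 1 => fun i j => ∑ l ∈ Finset.Icc (i - (s : ℤ)) (j + 1), L2pow x y s i l * L2e x y l j

/-- The recursion polynomial
`Γ_k(x,y;u) = (v_k/y_k)(-(L₁P₁'(L₁))_{k+1,k+1} - (L₂P₂'(L₂))_{k,k}
              + (P₁'(L₁))_{k+1,k} + (P₂'(L₂))_{k,k+1}) + k x_k`
where `P₁(λ) = ∑_{i=1}^N u_i λ^i/i`, `P₂(λ) = ∑_{i=1}^N u_{-i} λ^i/i`, `v_k = 1 - x_k y_k`.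
The apparent denominator `y_k` cancels, thanks to the identities
`(L₁^{i-1})_{k+1,k} - (L₁^i)_{k+1,k+1} = y_k ∑_{l} x_l (L₁^{i-1})_{k+1,l}` and
`(L₂^{i-1})_{k,k+1} - (L₂^i)_{k,k} = y_k ∑_{l} x_{l-1} (L₂^{i-1})_{k,l}`,
which is how the cancellation-free expression below is obtained. -/
def GamA (N : ℕ) (u : ℤ → A) (x y : ℤ → A) (k : ℤ) : A :=
  (1 - x k * y k) *
    ((∑ i ∈ Finset.Icc 1 N, u (i : ℤ) *
        ∑ l ∈ Finset.Icc k (k + (i : ℤ)), x l * L1pow x y (i - 1) (k + 1) l) +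
      ∑ i ∈ Finset.Icc 1 N, u (-(i : ℤ)) *
        ∑ l ∈ Finset.Icc (k - (i : ℤ) + 1) (k + 1), x (l - 1) * L2pow x y (i - 1) k l) +
  (k : A) * x k

/-- The recursion polynomial
`Γ̃_k(x,y;u) = (v_k/x_k)(-(L₁P₁'(L₁))_{k,k} - (L₂P₂'(L₂))_{k+1,k+1}
              + (P₁'(L₁))_{k+1,k} + (P₂'(L₂))_{k,k+1}) + k y_k`,
written in cancellation-free form using
`(L₁^{i-1})_{k+1,k} - (L₁^i)_{k,k} = x_k ∑_{l} y_{l-1} (L₁^{i-1})_{l,k}` and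
`(L₂^{i-1})_{k,k+1} - (L₂^i)_{k+1,k+1} = x_k ∑_{l} y_l (L₂^{i-1})_{l,k+1}`. -/
def GamB (N : ℕ) (u : ℤ → A) (x y : ℤ → A) (k : ℤ) : A :=
  (1 - x k * y k) *
    ((∑ i ∈ Finset.Icc 1 N, u (i : ℤ) *
        ∑ l ∈ Finset.Icc (k - (i : ℤ) + 1) (k + 1), y (l - 1) * L1pow x y (i - 1) l k) +
      ∑ i ∈ Finset.Icc 1 N, u (-(i : ℤ)) *
        ∑ l ∈ Finset.Icc k (k + (i : ℤ)), y l * L2pow x y (i - 1) l (k + 1)) +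
  (k : A) * y k

/-- The self-dual recursion polynomial
`Γ_k(x;u) = (v_k/x_k)(2(P'(L))_{k+1,k} - (LP'(L))_{k+1,k+1} - (LP'(L))_{k,k}) + k x_k`
(where `L = L₁` with `y = x`, `v_k = 1 - x_k²`), in cancellation-free form. -/
def GamSD (N : ℕ) (u : ℕ → A) (x : ℤ → A) (k : ℤ) : A :=
  (1 - x k * x k) *
    (∑ i ∈ Finset.Icc 1 N, u i *
      ((∑ l ∈ Finset.Icc k (k + (i : ℤ)), x l * L1pow x x (i - 1) (k + 1) l) +
        ∑ l ∈ Finset.Icc (k - (i : ℤ) + 1) (k + 1), x (l - 1) * L1pow x x (i - 1) l k)) +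
  (k : A) * x k

variable {K : Type*} [Field K]

/-- `f(t) = O(t^m)` for a formal Laurent series. -/
def BigO (f : LaurentSeries K) (m : ℤ) : Prop := ∀ i < m, f.coeff i = 0

/-- A family `x(t) = (x_k(t))_{k ∈ ℤ}` of formal Laurent series is a solution of the first
vector field of the self-dual Toeplitz lattice: `dx_k/dt = (1 - x_k²)(x_{k+1} - x_{k-1})`;
stated coefficientwise (the coefficient of `t^m` in `dx_k/dt` is `(m+1)·x_k^{(m+1)}`). -/
def IsSolSD (x : ℤ → LaurentSeries K) : Prop :=
  ∀ k m : ℤ, ((m + 1 : ℤ) : K) * (x k).coeff (m + 1) =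
    ((1 - x k * x k) * (x (k + 1) - x (k - 1))).coeff m

/-- A family `(x_k(t), y_k(t))_{k ∈ ℤ}` of formal Laurent series is a solution of the first
Toeplitz vector field: `dx_k/dt = (1 - x_k y_k)(x_{k+1} - x_{k-1})`,
`dy_k/dt = (1 - x_k y_k)(y_{k+1} - y_{k-1})`. -/
def IsSolT (x y : ℤ → LaurentSeries K) : Prop :=
  ∀ k m : ℤ,
    ((m + 1 : ℤ) : K) * (x k).coeff (m + 1) =
      ((1 - x k * y k) * (x (k + 1) - x (k - 1))).coeff m ∧
    ((m + 1 : ℤ) : K) * (y k).coeff (m + 1) =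
      ((1 - x k * y k) * (y (k + 1) - y (k - 1))).coeff m

end SingConf

open SingConf

variable (F : Type*) [Field F] [CharZero F] (n : ℤ) (N : ℕ)


/-!
Along a Toeplitz flow, the deformed pair `(Γ, Γ̃)` solves the variational equation
`Γ_k' = v_k (Γ_{k+1} - Γ_{k-1}) - (x_{k+1} - x_{k-1}) (y_k Γ_k - x_k Γ̃_k)`, together with its image
under `x ↔ y`. For the contribution of a single power of `L₁` or `L₂` this follows from the Lax
equation, and the defect of the explicit term `k x_k` is cancelled by the derivatives of
`u₁ + t` and `u₋₁ + t`.

For `|k - n| > N` the polynomials `Γ_k`, `Γ̃_k` only involve regular series. As `v_k(0) ≠ 0` for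
`|k - n| ≥ 2`, the variational equation at `k` propagates regularity from both ends up to the
neighbours of `n`. At `n ± 1` the factor `v_{n±1}` has a simple zero while `x_n` and `y_n` have a
simple pole, so the equations there yield the double pole of `Γ_n`, `Γ̃_n` with its leading
coefficient, computed from either side; equating the two values is (iii). The coefficient of `t⁻²`
in the equations at `n` then gives the residues.
-/
namespace SingConf

section Reflection

variable {A : Type*}

/-- The reflection `k ↦ -k` of the lattice `ℤ`. Combined with `x ↔ y` it maps `L₁` to its
transpose about the antidiagonal, and together with time reversal it preserves the Toeplitz
flow. -/
def reflect (f : ℤ → A) : ℤ → A := fun k => f (-k)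

lemma reflect_apply (f : ℤ → A) (k : ℤ) : reflect f k = f (-k) := rfl

lemma reflect_reflect (f : ℤ → A) : reflect (reflect f) = f :=
  funext fun k => congrArg f (neg_neg k)

lemma reflect_add_one (f : ℤ → A) (k : ℤ) : reflect f (k + 1) = f (-k - 1) :=
  congrArg f (by ring)

lemma reflect_sub_one (f : ℤ → A) (k : ℤ) : reflect f (k - 1) = f (-k + 1) :=
  congrArg f (by ring)

end Reflection

section LaxPowers

variable {A : Type*} [CommRing A]

lemma L1pow_succ (x y : ℤ → A) (s : ℕ) (i j : ℤ) :
    L1pow x y (s + 1) i j =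
      ∑ l ∈ Finset.Icc (j - 1) (i + (s : ℤ)), L1pow x y s i l * L1e x y l j := rfl

lemma L1pow_eq_zero (x y : ℤ → A) {s : ℕ} {i j : ℤ} (h : i + s < j) : L1pow x y s i j = 0 := by
  cases s with
  | zero => exact if_neg (by simp at h; omega)
  | succ s => rw [L1pow_succ, Finset.Icc_eq_empty (by push_cast at h; omega), Finset.sum_empty]

lemma L1pow_succ_left (x y : ℤ → A) (s : ℕ) (i j : ℤ) :
    L1pow x y (s + 1) i j =
      ∑ l ∈ Finset.Icc (j - (s : ℤ)) (i + 1), L1e x y i l * L1pow x y s l j := by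
  induction s generalizing i j with
  | zero => simp [L1pow]
  | succ s ih =>
    rw [L1pow_succ]
    simp only [ih, Finset.sum_mul]
    rw [Finset.sum_comm' (t' := Finset.Icc (j - ((s + 1 : ℕ) : ℤ)) (i + 1))
      (s' := fun m => Finset.Icc (j - 1) (m + (s : ℤ)))
      (by intro l m; simp only [Finset.mem_Icc]; push_cast; omega)]
    refine Finset.sum_congr rfl fun m _ => ?_
    rw [← ih, L1pow_succ, Finset.mul_sum]
    simp only [mul_assoc]

lemma L2pow_eq_L1pow_swap (x y : ℤ → A) (s : ℕ) (i j : ℤ) :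
    L2pow x y s i j = L1pow y x s j i := by
  induction s generalizing i j with
  | zero => simp only [L2pow, L1pow, eq_comm]
  | succ s ih =>
    rw [L1pow_succ_left]
    simp only [L2pow, ih, mul_comm (L1pow _ _ _ _ _)]
    rfl

lemma sum_Icc_one_sub {M : Type*} [AddCommMonoid M] (f : ℤ → M) (a b : ℤ) :
    ∑ l ∈ Finset.Icc (1 - b) (1 - a), f l = ∑ l ∈ Finset.Icc a b, f (1 - l) :=
  Finset.sum_nbij' (1 - ·) (1 - ·) (by simp; omega) (by simp; omega) (by simp) (by simp)
    (by simp)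

lemma L1e_reflect (x y : ℤ → A) (i j : ℤ) :
    L1e (reflect y) (reflect x) (1 - j) (1 - i) = L1e x y i j := by
  have hx : -(1 - i - 1) = i := by ring
  have hy : -(1 - j) = j - 1 := by ring
  have hle : 1 - i ≤ 1 - j + 1 ↔ j ≤ i + 1 := by omega
  have heq : 1 - j + 1 = 1 - i ↔ i + 1 = j := by omega
  simp only [L1e, reflect, hx, hy, hle, heq, mul_comm (x i)]

lemma L1pow_reflect (x y : ℤ → A) (s : ℕ) (i j : ℤ) :
    L1pow (reflect y) (reflect x) s (1 - j) (1 - i) = L1pow x y s i j := by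
  induction s generalizing i j with
  | zero => simp [L1pow, eq_comm]
  | succ s ih =>
    have hbounds : Finset.Icc (1 - i - 1) (1 - j + (s : ℤ)) =
        Finset.Icc (1 - (i + 1)) (1 - (j - s)) := by congr 1 <;> ring
    rw [L1pow_succ, L1pow_succ_left, hbounds, sum_Icc_one_sub]
    simp only [ih, L1e_reflect, mul_comm]

/-- The truncated pairing `∑_{l ≥ m} x_l (L₁^s)_{il}` of `x` with a row of `L₁^s`. -/
def rowTail (x y : ℤ → A) (s : ℕ) (i m : ℤ) : A :=
  ∑ l ∈ Finset.Icc m (i + (s : ℤ)), x l * L1pow x y s i l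

/-- The truncated pairing `∑_{l ≤ m} y_{l-1} (L₁^s)_{lj}` of `y` with a column of `L₁^s`. -/
def colTail (x y : ℤ → A) (s : ℕ) (m j : ℤ) : A :=
  ∑ l ∈ Finset.Icc (j - (s : ℤ)) m, y (l - 1) * L1pow x y s l j

lemma rowTail_eq_zero (x y : ℤ → A) {s : ℕ} {i m : ℤ} (h : i + s < m) :
    rowTail x y s i m = 0 := by
  rw [rowTail, Finset.Icc_eq_empty (by omega), Finset.sum_empty]

lemma colTail_eq_rowTail_reflect (x y : ℤ → A) (s : ℕ) (m j : ℤ) :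
    colTail x y s m j = rowTail (reflect y) (reflect x) s (1 - j) (1 - m) := by
  have hbound : 1 - j + (s : ℤ) = 1 - (j - s) := by ring
  rw [rowTail, hbound, sum_Icc_one_sub]
  simp only [L1pow_reflect, reflect, neg_sub, colTail]

lemma rowTail_eq_add (x y : ℤ → A) (s : ℕ) (i m : ℤ) :
    rowTail x y s i m = x m * L1pow x y s i m + rowTail x y s i (m + 1) := by
  rcases le_or_gt m (i + s) with h | h
  · rw [rowTail, ← Finset.insert_Icc_add_one_left_eq_Icc h, Finset.sum_insert (by simp), rowTail]
  · rw [rowTail_eq_zero x y h, rowTail_eq_zero x y (by omega), L1pow_eq_zero x y h, mul_zero,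
      add_zero]

lemma L1pow_succ_eq_sub_rowTail (x y : ℤ → A) (s : ℕ) (i j : ℤ) :
    L1pow x y (s + 1) i j = L1pow x y s i (j - 1) - y (j - 1) * rowTail x y s i (j - 1) := by
  have hterm : ∀ l ∈ Finset.Icc (j - 1) (i + (s : ℤ)), L1pow x y s i l * L1e x y l j =
      (if l = j - 1 then L1pow x y s i l else 0) - y (j - 1) * (x l * L1pow x y s i l) := by
    intro l hl
    rw [Finset.mem_Icc] at hl
    rw [L1e, if_pos (by omega), if_congr (show l + 1 = j ↔ l = j - 1 by omega) rfl rfl]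
    split_ifs <;> ring
  have hdiag : ¬ (j - 1 ≤ i + s) → L1pow x y s i (j - 1) = 0 :=
    fun h => L1pow_eq_zero x y (by omega)
  rw [L1pow_succ, Finset.sum_congr rfl hterm, Finset.sum_sub_distrib, ← Finset.mul_sum,
    Finset.sum_ite_eq', rowTail]
  simp +contextual [hdiag]

lemma colTail_eq_add (x y : ℤ → A) (s : ℕ) (m j : ℤ) :
    colTail x y s m j = y (m - 1) * L1pow x y s m j + colTail x y s (m - 1) j := by
  have hm : 1 - m + 1 = 1 - (m - 1) := by ring
  rw [colTail_eq_rowTail_reflect, rowTail_eq_add, L1pow_reflect, hm,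
    ← colTail_eq_rowTail_reflect, reflect, neg_sub]

lemma L1pow_succ_eq_sub_colTail (x y : ℤ → A) (s : ℕ) (i j : ℤ) :
    L1pow x y (s + 1) i j = L1pow x y s (i + 1) j - x i * colTail x y s (i + 1) j := by
  have hi : 1 - i - 1 = 1 - (i + 1) := by ring
  have hi' : -(1 - (i + 1)) = i := by ring
  rw [← L1pow_reflect, L1pow_succ_eq_sub_rowTail, hi, L1pow_reflect,
    ← colTail_eq_rowTail_reflect, reflect, hi']

lemma L1pow_sub_rowTail_eq_sub_colTail (x y : ℤ → A) (s : ℕ) (i j : ℤ) :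
    L1pow x y s i (j - 1) - y (j - 1) * rowTail x y s i (j - 1) =
      L1pow x y s (i + 1) j - x i * colTail x y s (i + 1) j := by
  rw [← L1pow_succ_eq_sub_rowTail, L1pow_succ_eq_sub_colTail]

end LaxPowers

section IntDerivation

/-- Derivations of a commutative ring over `ℤ`. The abbreviation fixes the `ℤ`-algebra structure
before specialising to Laurent series, where instance search would find
`HahnSeries.powerSeriesAlgebra` instead of the canonical one. -/
abbrev IntDerivation (A : Type*) [CommRing A] := Derivation ℤ A A

variable {A : Type*} [CommRing A]

/-- The derivation given by an additive map that satisfies the Leibniz rule. -/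
def IntDerivation.ofLeibniz (D : A →+ A) (h : ∀ a b, D (a * b) = a * D b + b * D a) :
    IntDerivation A :=
  Derivation.mk' D.toIntLinearMap h

end IntDerivation

section ToeplitzFlow

variable {A : Type*} [CommRing A] {D : IntDerivation A} {x y : ℤ → A}

/-- The sequences `x`, `y` evolve by the first Toeplitz vector field, where the derivation `D`
plays the role of `d/dt`. -/
structure IsToeplitzFlow (D : IntDerivation A) (x y : ℤ → A) : Prop where
  deriv_fst (k : ℤ) : D (x k) = (1 - x k * y k) * (x (k + 1) - x (k - 1))
  deriv_snd (k : ℤ) : D (y k) = (1 - x k * y k) * (y (k + 1) - y (k - 1))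

/-- The entrywise Lax equation for `L₁^s`: the right-hand side is the `(i, j)` entry of the
commutator of a tridiagonal matrix with `L₁^s`. -/
def LaxEquation (D : IntDerivation A) (x y : ℤ → A) (s : ℕ) : Prop :=
  ∀ i j, D (L1pow x y s i j) =
    (1 - x i * y i) * L1pow x y s (i + 1) j - L1pow x y s (i - 1) j -
      (1 - x (j - 1) * y (j - 1)) * L1pow x y s i (j - 1) + L1pow x y s i (j + 1) +
      (x (i - 1) * y i - x (j - 1) * y j) * L1pow x y s i j

lemma laxEquation_zero (x y : ℤ → A) : LaxEquation D x y 0 := by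
  intro i j
  have hpred : i = j - 1 ↔ i + 1 = j := by omega
  have hsucc : i = j + 1 ↔ i - 1 = j := by omega
  rcases eq_or_ne i j with rfl | hne
  · simp [L1pow, hpred]
  rcases eq_or_ne (i + 1) j with rfl | hne_succ
  · simp [L1pow, hsucc]
  · simp [L1pow, hpred, hsucc, hne, hne_succ]

namespace IsToeplitzFlow

lemma swap (h : IsToeplitzFlow D x y) : IsToeplitzFlow D y x where
  deriv_fst k := by rw [h.deriv_snd, mul_comm (x k)]
  deriv_snd k := by rw [h.deriv_fst, mul_comm (x k)]

lemma reflect (h : IsToeplitzFlow D x y) :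
    IsToeplitzFlow (-D) (reflect x) (reflect y) where
  deriv_fst k := by
    rw [reflect_add_one, reflect_sub_one, Derivation.neg_apply, reflect_apply, reflect_apply,
      h.deriv_fst, ← mul_neg, neg_sub]
  deriv_snd k := by
    rw [reflect_add_one, reflect_sub_one, Derivation.neg_apply, reflect_apply, reflect_apply,
      h.deriv_snd, ← mul_neg, neg_sub]

lemma deriv_rowTail_of_laxEquation (h : IsToeplitzFlow D x y) {s : ℕ}
    (hlax : LaxEquation D x y s) (i m : ℤ) :
    D (rowTail x y s i m) =
      (1 - x i * y i) * rowTail x y s (i + 1) m - rowTail x y s (i - 1) m +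
        x (i - 1) * y i * rowTail x y s i m -
        (1 - x (m - 1) * y (m - 1)) * x m * L1pow x y s i (m - 1) -
        x (m - 1) * L1pow x y s i m := by
  have hfar : ∀ m, i + s + 2 ≤ m → D (rowTail x y s i m) =
      (1 - x i * y i) * rowTail x y s (i + 1) m - rowTail x y s (i - 1) m +
        x (i - 1) * y i * rowTail x y s i m -
        (1 - x (m - 1) * y (m - 1)) * x m * L1pow x y s i (m - 1) -
        x (m - 1) * L1pow x y s i m := by
    intro m hm
    rw [rowTail_eq_zero x y (i := i) (by omega), rowTail_eq_zero x y (i := i + 1) (by omega),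
      rowTail_eq_zero x y (i := i - 1) (by omega), L1pow_eq_zero x y (j := m) (by omega),
      L1pow_eq_zero x y (j := m - 1) (by omega), map_zero]
    ring
  rcases le_total (i + s + 2) m with hm | hm
  · exact hfar m hm
  induction m, hm using Int.leInductionDown with
  | base => exact hfar _ le_rfl
  | pred m _ ih =>
    have hstep := fun j => rowTail_eq_add x y s j (m - 1)
    simp only [sub_add_cancel] at hstep
    have hL := hlax i (m - 1)
    have hx := h.deriv_fst (m - 1)
    simp only [sub_add_cancel] at hL hx
    simp only [hstep, map_add, Derivation.leibniz, smul_eq_mul, ih, hL, hx]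
    ring

lemma laxEquation (h : IsToeplitzFlow D x y) (s : ℕ) : LaxEquation D x y s := by
  induction s with
  | zero => exact laxEquation_zero x y
  | succ s ih =>
    intro i j
    have hrow := h.deriv_rowTail_of_laxEquation ih
    have hcur := rowTail_eq_add x y s i (j - 1)
    have hprev := rowTail_eq_add x y s i (j - 1 - 1)
    have hy := h.deriv_snd (j - 1)
    have hL := ih i (j - 1)
    simp only [sub_add_cancel] at hcur hprev hy hL
    simp only [L1pow_succ_eq_sub_rowTail, map_sub, Derivation.leibniz, smul_eq_mul, hL, hy, hrow,
      add_sub_cancel_right]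
    linear_combination -(y j) * hcur - y (j - 1 - 1) * (1 - x (j - 1) * y (j - 1)) * hprev

lemma deriv_rowTail (h : IsToeplitzFlow D x y) (s : ℕ) (i m : ℤ) :
    D (rowTail x y s i m) =
      (1 - x i * y i) * rowTail x y s (i + 1) m - rowTail x y s (i - 1) m +
        x (i - 1) * y i * rowTail x y s i m -
        (1 - x (m - 1) * y (m - 1)) * x m * L1pow x y s i (m - 1) -
        x (m - 1) * L1pow x y s i m :=
  h.deriv_rowTail_of_laxEquation (h.laxEquation s) i m

end IsToeplitzFlow

end ToeplitzFlow

section TangentFlow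

variable {A : Type*} [CommRing A] {D : IntDerivation A} {x y : ℤ → A}

/-- The failure of a pair of sequences `w = (Γ, Γ̃)` to satisfy the first half
`Γ_k' = v_k (Γ_{k+1} - Γ_{k-1}) - (x_{k+1} - x_{k-1}) (y_k Γ_k - x_k Γ̃_k)` of the variational
equation of the Toeplitz flow, `v_k = 1 - x_k y_k`. (The linearisation of the flow in the
direction `(Γ, -Γ̃)`.) -/
def tangentDefect (D : IntDerivation A) (x y : ℤ → A) : (ℤ → A) × (ℤ → A) →+ (ℤ → A) :=
  AddMonoidHom.mk' (fun w k => D (w.1 k) - ((1 - x k * y k) * (w.1 (k + 1) - w.1 (k - 1)) -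
    (x (k + 1) - x (k - 1)) * (y k * w.1 k - x k * w.2 k))) fun w w' => by
      funext k
      simp only [Prod.fst_add, Prod.snd_add, Pi.add_apply, map_add]
      ring

lemma tangentDefect_apply (D : IntDerivation A) (x y : ℤ → A) (w : (ℤ → A) × (ℤ → A)) (k : ℤ) :
    tangentDefect D x y w k = D (w.1 k) - ((1 - x k * y k) * (w.1 (k + 1) - w.1 (k - 1)) -
      (x (k + 1) - x (k - 1)) * (y k * w.1 k - x k * w.2 k)) := rfl

lemma tangentDefect_smul (D : IntDerivation A) (x y : ℤ → A) (c : A) (w : (ℤ → A) × (ℤ → A)) :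
    tangentDefect D x y (c • w) = c • tangentDefect D x y w + D c • w.1 := by
  funext k
  simp only [tangentDefect_apply, Prod.smul_fst, Prod.smul_snd, Pi.smul_apply, Pi.add_apply,
    smul_eq_mul, Derivation.leibniz]
  ring

lemma tangentDefect_reflect (D : IntDerivation A) (x y : ℤ → A) (w : (ℤ → A) × (ℤ → A)) :
    tangentDefect (-D) (reflect x) (reflect y) (reflect w.1, reflect w.2) =
      -reflect (tangentDefect D x y w) := by
  funext k
  simp only [tangentDefect_apply, Pi.neg_apply, Derivation.neg_apply, reflect_add_one,
    reflect_sub_one]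
  simp only [reflect_apply, tangentDefect_apply]
  ring

lemma tangentDefect_reflect_eq_zero_iff (D : IntDerivation A) (x y : ℤ → A)
    (w : (ℤ → A) × (ℤ → A)) :
    tangentDefect (-D) (reflect x) (reflect y) (reflect w.1, reflect w.2) = 0 ↔
      tangentDefect D x y w = 0 := by
  rw [tangentDefect_reflect, neg_eq_zero]
  exact ⟨fun h => by rw [← reflect_reflect (tangentDefect D x y w), h]; rfl,
    fun h => by rw [h]; rfl⟩

/-- The pair `w = (Γ, Γ̃)` solves the variational equation of the Toeplitz flow `(x, y)`: the
vector field `(Γ, -Γ̃)` along the flow is transported by its linearisation. -/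
structure IsTangentFlow (D : IntDerivation A) (x y : ℤ → A) (w : (ℤ → A) × (ℤ → A)) : Prop where
  fst : tangentDefect D x y w = 0
  snd : tangentDefect D y x w.swap = 0

namespace IsTangentFlow

variable {w : (ℤ → A) × (ℤ → A)}

lemma swap (h : IsTangentFlow D x y w) : IsTangentFlow D y x w.swap :=
  ⟨h.snd, h.fst⟩

lemma reflect (h : IsTangentFlow D x y w) :
    IsTangentFlow (-D) (reflect x) (reflect y) (reflect w.1, reflect w.2) :=
  ⟨(tangentDefect_reflect_eq_zero_iff D x y w).2 h.fst,
    (tangentDefect_reflect_eq_zero_iff D y x w.swap).2 h.snd⟩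

lemma deriv_fst (h : IsTangentFlow D x y w) (k : ℤ) :
    D (w.1 k) = (1 - x k * y k) * (w.1 (k + 1) - w.1 (k - 1)) -
      (x (k + 1) - x (k - 1)) * (y k * w.1 k - x k * w.2 k) :=
  sub_eq_zero.1 (congrFun h.fst k)

end IsTangentFlow

/-- The contribution of `L₁^s` to the pair `(Γ, Γ̃)`. -/
def tailPair (x y : ℤ → A) (s : ℕ) : (ℤ → A) × (ℤ → A) :=
  (fun k => (1 - x k * y k) * rowTail x y s (k + 1) k,
    fun k => (1 - x k * y k) * colTail x y s (k + 1) k)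

lemma tailPair_swap_reflect (x y : ℤ → A) (s : ℕ) :
    tailPair (reflect y) (reflect x) s =
      (reflect (tailPair x y s).2, reflect (tailPair x y s).1) := by
  have hcol (k : ℤ) : colTail x y s (-k + 1) (-k) =
      rowTail (reflect y) (reflect x) s (k + 1) k := by
    rw [colTail_eq_rowTail_reflect]
    congr 1 <;> ring
  have hrow (k : ℤ) : colTail (reflect y) (reflect x) s (k + 1) k =
      rowTail x y s (-k + 1) (-k) := by
    rw [colTail_eq_rowTail_reflect, reflect_reflect, reflect_reflect]
    congr 1 <;> ring
  ext k
  · simp only [tailPair, reflect_apply, hcol, mul_comm (y (-k))]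
  · simp only [tailPair, reflect_apply, hrow, mul_comm (y (-k))]

lemma IsToeplitzFlow.tangentDefect_tailPair (h : IsToeplitzFlow D x y) (s : ℕ) :
    tangentDefect D x y (tailPair x y s) = 0 := by
  funext k
  have hderiv := h.deriv_rowTail s (k + 1) k
  have hrow_two := rowTail_eq_add x y s (k + 1 + 1) k
  have hrow_one := rowTail_eq_add x y s (k + 1) (k - 1)
  have hrow_zero := rowTail_eq_add x y s k (k - 1)
  have hcol := colTail_eq_add x y s (k + 1 + 1) k
  have hpow := L1pow_sub_rowTail_eq_sub_colTail x y s k k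
  have hpow_succ := L1pow_sub_rowTail_eq_sub_colTail x y s (k + 1) k
  simp only [sub_add_cancel, add_sub_cancel_right] at hderiv hrow_one hrow_zero hcol
  simp only [tangentDefect_apply, tailPair, Pi.zero_apply, Derivation.leibniz, map_sub,
    Derivation.map_one_eq_zero, smul_eq_mul, hderiv, h.deriv_fst, h.deriv_snd, sub_add_cancel]
  linear_combination (1 - x k * y k) * ((1 - x (k + 1) * y (k + 1)) * hrow_two + hrow_zero +
    x (k - 1) * hpow - x k * (hpow_succ + y (k - 1) * hrow_one - x (k + 1) * hcol))

lemma IsToeplitzFlow.isTangentFlow_tailPair (h : IsToeplitzFlow D x y) (s : ℕ) :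
    IsTangentFlow D x y (tailPair x y s) where
  fst := h.tangentDefect_tailPair s
  snd := by
    rw [← tangentDefect_reflect_eq_zero_iff, Prod.fst_swap, Prod.snd_swap,
      ← tailPair_swap_reflect]
    exact h.swap.reflect.tangentDefect_tailPair s

/-- The pair `(Γ, Γ̃)` of sequences of recursion polynomials. -/
def gammaPair (N : ℕ) (u x y : ℤ → A) : (ℤ → A) × (ℤ → A) :=
  (GamA N u x y, GamB N u x y)

lemma GamB_eq_GamA_swap (N : ℕ) (u x y : ℤ → A) :
    GamB N u x y = GamA N (reflect u) y x := by
  funext k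
  simp only [GamA, GamB, reflect_apply, neg_neg, L2pow_eq_L1pow_swap, mul_comm (y k) (x k)]
  rw [add_comm (∑ i ∈ Finset.Icc 1 N, u (-(i : ℤ)) * _)]

lemma gammaPair_swap (N : ℕ) (u x y : ℤ → A) :
    (gammaPair N u x y).swap = gammaPair N (reflect u) y x := by
  simp only [gammaPair, Prod.swap_prod_mk, GamB_eq_GamA_swap, reflect_reflect]

lemma GamA_eq_sum_tails (N : ℕ) (u x y : ℤ → A) (k : ℤ) :
    GamA N u x y k =
      ∑ i ∈ Finset.Icc 1 N, (u i * (tailPair x y (i - 1)).1 k +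
        u (-i) * (tailPair y x (i - 1)).2 k) + k * x k := by
  rw [GamA, mul_add, Finset.mul_sum, Finset.mul_sum, ← Finset.sum_add_distrib]
  congr 1
  refine Finset.sum_congr rfl fun i hi => ?_
  have hi : 1 ≤ i := (Finset.mem_Icc.1 hi).1
  have hrow : k + 1 + ((i - 1 : ℕ) : ℤ) = k + i := by omega
  have hcol : k - ((i - 1 : ℕ) : ℤ) = k - i + 1 := by omega
  simp only [tailPair, rowTail, colTail, hrow, hcol, L2pow_eq_L1pow_swap, mul_comm (y k) (x k)]
  ring

lemma gammaPair_eq_sum_tails (N : ℕ) (u x y : ℤ → A) :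
    gammaPair N u x y = ∑ i ∈ Finset.Icc 1 N, (u i • tailPair x y (i - 1) +
      u (-i) • (tailPair y x (i - 1)).swap) + (fun k : ℤ => k * x k, fun k : ℤ => k * y k) := by
  ext k
  · simp [gammaPair, GamA_eq_sum_tails, Prod.fst_sum]
  · simp [gammaPair, GamB_eq_GamA_swap, GamA_eq_sum_tails, Prod.snd_sum, reflect, add_comm]

lemma tailPair_zero (x y : ℤ → A) :
    tailPair x y 0 = (fun k => (1 - x k * y k) * x (k + 1),
      fun k => (1 - x k * y k) * y (k - 1)) := by
  ext k <;> simp [tailPair, rowTail, colTail, L1pow]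

lemma IsToeplitzFlow.tangentDefect_index_mul (h : IsToeplitzFlow D x y) :
    tangentDefect D x y (fun k : ℤ => k * x k, fun k : ℤ => k * y k) =
      -((tailPair x y 0).1 + (tailPair y x 0).2) := by
  funext k
  simp only [tangentDefect_apply, tailPair_zero, Derivation.leibniz, Derivation.map_intCast,
    h.deriv_fst, smul_eq_mul, Pi.neg_apply, Pi.add_apply]
  push_cast
  ring

lemma IsToeplitzFlow.tangentDefect_gammaPair (h : IsToeplitzFlow D x y) {N : ℕ} (hN : 1 ≤ N)
    {u : ℤ → A} (hu : ∀ i, D (u i) = if i = 1 ∨ i = -1 then 1 else 0) :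
    tangentDefect D x y (gammaPair N u x y) = 0 := by
  have hterm (i : ℕ) : tangentDefect D x y (u i • tailPair x y (i - 1) +
      u (-i) • (tailPair y x (i - 1)).swap) =
        if i = 1 then (tailPair x y 0).1 + (tailPair y x 0).2 else 0 := by
    have hparam : D (u i) = if i = 1 then 1 else 0 := by
      rw [hu]; exact if_congr (by omega) rfl rfl
    have hparam_neg : D (u (-i)) = if i = 1 then 1 else 0 := by
      rw [hu]; exact if_congr (by omega) rfl rfl
    rw [map_add, tangentDefect_smul, tangentDefect_smul, (h.isTangentFlow_tailPair _).fst,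
      (h.swap.isTangentFlow_tailPair _).snd, hparam, hparam_neg]
    split_ifs with hi <;> simp [hi]
  rw [gammaPair_eq_sum_tails, map_add, map_sum, Finset.sum_congr rfl fun i _ => hterm i,
    Finset.sum_ite_eq', if_pos (Finset.mem_Icc.2 ⟨le_rfl, hN⟩), h.tangentDefect_index_mul,
    add_neg_cancel]

/-- Differentiating `u₁` and `u₋₁` compensates for the defect of the explicit term `k x_k`. -/
theorem IsToeplitzFlow.isTangentFlow_gammaPair (h : IsToeplitzFlow D x y) {N : ℕ} (hN : 1 ≤ N)
    {u : ℤ → A} (hu : ∀ i, D (u i) = if i = 1 ∨ i = -1 then 1 else 0) :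
    IsTangentFlow D x y (gammaPair N u x y) where
  fst := h.tangentDefect_gammaPair hN hu
  snd := by
    rw [gammaPair_swap]
    refine h.swap.tangentDefect_gammaPair hN fun i => ?_
    rw [reflect_apply, hu]
    exact if_congr (by omega) rfl rfl

end TangentFlow

section Membership

variable {A : Type*} [CommRing A] {S : Subring A} {x y : ℤ → A}

lemma L1pow_mem {a b : ℤ} (hx : ∀ l ∈ Set.Icc a b, x l ∈ S) (hy : ∀ l ∈ Set.Icc a b, y l ∈ S)
    {s : ℕ} {i j : ℤ} (hib : i + s ≤ b) (hja : a ≤ j - s) (hjb : j - 1 ≤ b) :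
    L1pow x y s i j ∈ S := by
  induction s generalizing j with
  | zero =>
    simp only [L1pow]
    split_ifs
    exacts [S.one_mem, S.zero_mem]
  | succ s ih =>
    push_cast at hib hja
    rw [L1pow_succ]
    refine S.sum_mem fun l hl => ?_
    rw [Finset.mem_Icc] at hl
    have hxy : x l * y (j - 1) ∈ S :=
      S.mul_mem (hx l ⟨by omega, by omega⟩) (hy (j - 1) ⟨by omega, by omega⟩)
    have hentry : L1e x y l j ∈ S := by
      rw [L1e]
      split_ifs
      exacts [S.add_mem (S.neg_mem hxy) S.one_mem, S.add_mem (S.neg_mem hxy) S.zero_mem, S.zero_mem]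
    exact S.mul_mem (ih (by omega) (by omega) (by omega)) hentry

lemma tailPair_fst_mem {k : ℤ} {s : ℕ} (hx : ∀ l ∈ Set.Icc (k - s - 1) (k + s + 1), x l ∈ S)
    (hy : ∀ l ∈ Set.Icc (k - s - 1) (k + s + 1), y l ∈ S) : (tailPair x y s).1 k ∈ S := by
  refine S.mul_mem (S.sub_mem S.one_mem (S.mul_mem (hx k ⟨by omega, by omega⟩)
    (hy k ⟨by omega, by omega⟩))) (S.sum_mem fun l hl => ?_)
  rw [Finset.mem_Icc] at hl
  exact S.mul_mem (hx l ⟨by omega, by omega⟩)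
    (L1pow_mem hx hy (by omega) (by omega) (by omega))

lemma tailPair_snd_mem {k : ℤ} {s : ℕ} (hx : ∀ l ∈ Set.Icc (k - s - 1) (k + s + 1), x l ∈ S)
    (hy : ∀ l ∈ Set.Icc (k - s - 1) (k + s + 1), y l ∈ S) : (tailPair x y s).2 k ∈ S := by
  have hreflect : (tailPair x y s).2 k = (tailPair (reflect y) (reflect x) s).1 (-k) := by
    rw [tailPair_swap_reflect]
    exact congrArg (tailPair x y s).2 (neg_neg k).symm
  rw [hreflect]
  refine tailPair_fst_mem (fun l hl => hy (-l) ?_) (fun l hl => hx (-l) ?_) <;>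
  · rw [Set.mem_Icc] at hl ⊢
    omega

lemma GamA_mem {N : ℕ} {u : ℤ → A} {k : ℤ} (hu : ∀ i, u i ∈ S)
    (hx : ∀ l ∈ Set.Icc (k - N) (k + N), x l ∈ S) (hy : ∀ l ∈ Set.Icc (k - N) (k + N), y l ∈ S) :
    GamA N u x y k ∈ S := by
  rw [GamA_eq_sum_tails]
  refine S.add_mem (S.sum_mem fun i hi => ?_)
    (S.mul_mem (intCast_mem S k) (hx k ⟨by omega, by omega⟩))
  have hsub : Set.Icc (k - (i - 1 : ℕ) - 1) (k + (i - 1 : ℕ) + 1) ⊆ Set.Icc (k - N) (k + N) := by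
    rw [Finset.mem_Icc] at hi
    exact Set.Icc_subset_Icc (by omega) (by omega)
  have hx' := fun l hl => hx l (hsub hl)
  have hy' := fun l hl => hy l (hsub hl)
  exact S.add_mem (S.mul_mem (hu _) (tailPair_fst_mem hx' hy'))
    (S.mul_mem (hu _) (tailPair_snd_mem hy' hx'))

lemma GamB_mem {N : ℕ} {u : ℤ → A} {k : ℤ} (hu : ∀ i, u i ∈ S)
    (hx : ∀ l ∈ Set.Icc (k - N) (k + N), x l ∈ S) (hy : ∀ l ∈ Set.Icc (k - N) (k + N), y l ∈ S) :
    GamB N u x y k ∈ S := by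
  rw [GamB_eq_GamA_swap]
  exact GamA_mem (fun i => hu (-i)) hy hx

end Membership

section LaurentOrder

variable {K : Type*} [Field K] {f g : LaurentSeries K} {a b : ℤ}

namespace BigO

lemma mono (hf : BigO f a) (h : b ≤ a) : BigO f b := fun m hm => hf m (hm.trans_le h)

lemma add (hf : BigO f a) (hg : BigO g a) : BigO (f + g) a := fun m hm => by
  rw [HahnSeries.coeff_add, hf m hm, hg m hm, add_zero]

lemma sub (hf : BigO f a) (hg : BigO g a) : BigO (f - g) a := fun m hm => by
  rw [HahnSeries.coeff_sub, hf m hm, hg m hm, sub_zero]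

lemma one : BigO (1 : LaurentSeries K) 0 := fun m hm => by
  rw [HahnSeries.coeff_one, if_neg hm.ne]

lemma order (f : LaurentSeries K) : BigO f f.order :=
  fun _ hm => HahnSeries.coeff_eq_zero_of_lt_order hm

lemma coeff_mul (hf : BigO f a) (hg : BigO g b) (m : ℤ) :
    (f * g).coeff m = ∑ i ∈ Finset.Icc a (m - b), f.coeff i * g.coeff (m - i) := by
  rw [HahnSeries.coeff_mul]
  refine Finset.sum_of_injOn Prod.fst ?_ ?_ ?_ ?_
  · rintro ⟨i, j⟩ hij ⟨i', j'⟩ hij' (rfl : i = i')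
    simp only [Finset.mem_coe, Finset.mem_antidiagonal] at hij hij'
    simp only [Prod.mk.injEq, true_and]
    omega
  · rintro ⟨i, j⟩ hij
    simp only [Finset.mem_coe, Finset.mem_antidiagonal, HahnSeries.mem_support] at hij
    have hi : a ≤ i := not_lt.1 fun h => hij.1 (hf i h)
    have hj : b ≤ j := not_lt.1 fun h => hij.2.1 (hg j h)
    simp only [Finset.coe_Icc, Set.mem_Icc]
    omega
  · intro i _ hi
    by_contra hne
    refine hi ⟨(i, m - i), ?_, rfl⟩
    simp only [Finset.mem_coe, Finset.mem_antidiagonal, HahnSeries.mem_support]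
    exact ⟨left_ne_zero_of_mul hne, right_ne_zero_of_mul hne, by ring⟩
  · rintro ⟨i, j⟩ hij
    rw [← (Finset.mem_antidiagonal.1 hij).2.2]
    simp

lemma mul (hf : BigO f a) (hg : BigO g b) : BigO (f * g) (a + b) := fun m hm => by
  rw [hf.coeff_mul hg, Finset.Icc_eq_empty (by omega), Finset.sum_empty]

lemma coeff_mul_leading (hf : BigO f a) (hg : BigO g b) :
    (f * g).coeff (a + b) = f.coeff a * g.coeff b := by
  rw [hf.coeff_mul hg, add_sub_cancel_right, Finset.Icc_self, Finset.sum_singleton,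
    add_sub_cancel_left]

lemma coeff_mul_leading_add_one (hf : BigO f a) (hg : BigO g b) :
    (f * g).coeff (a + b + 1) = f.coeff a * g.coeff (b + 1) + f.coeff (a + 1) * g.coeff b := by
  have hIcc : Finset.Icc a (a + b + 1 - b) = {a, a + 1} := by
    ext l
    simp only [Finset.mem_Icc, Finset.mem_insert, Finset.mem_singleton]
    omega
  have hfst : a + b + 1 - a = b + 1 := by ring
  have hsnd : a + b + 1 - (a + 1) = b := by ring
  rw [hf.coeff_mul hg, hIcc, Finset.sum_pair (by omega), hfst, hsnd]

lemma of_mul_left (hf : BigO f a) (hfa : f.coeff a ≠ 0) (h : BigO (f * g) (a + b)) :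
    BigO g b := by
  rcases eq_or_ne g 0 with rfl | hg
  · exact fun i _ => rfl
  refine (order g).mono (not_lt.1 fun hlt => ?_)
  have hleading := hf.coeff_mul_leading (order g)
  rw [h _ (by omega)] at hleading
  exact mul_ne_zero hfa (HahnSeries.coeff_order_eq_zero.not.2 hg) hleading.symm

end BigO

/-- The ring of power series, inside the field of Laurent series. -/
def regularSubring (K : Type*) [Field K] : Subring (LaurentSeries K) where
  carrier := {f | BigO f 0}
  mul_mem' hf hg := hf.mul hg
  one_mem' := BigO.one
  add_mem' hf hg := hf.add hg
  zero_mem' _ _ := rfl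
  neg_mem' hf m hm := by rw [HahnSeries.coeff_neg, hf m hm, neg_zero]

lemma coeff_derivative (f : LaurentSeries K) (m : ℤ) :
    (LaurentSeries.derivative K f).coeff m = ((m + 1 : ℤ) : K) * f.coeff (m + 1) := by
  simp [LaurentSeries.derivative_apply]

lemma derivative_mul (f g : LaurentSeries K) :
    LaurentSeries.derivative K (f * g) =
      f * LaurentSeries.derivative K g + g * LaurentSeries.derivative K f := by
  have hderiv (h : LaurentSeries K) : BigO (LaurentSeries.derivative K h) (h.order - 1) :=
    fun m hm => by rw [coeff_derivative, BigO.order h _ (by omega), mul_zero]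
  ext m
  rw [mul_comm g, coeff_derivative, HahnSeries.coeff_add,
    (BigO.order f).coeff_mul (BigO.order g), (BigO.order f).coeff_mul (hderiv g),
    (hderiv f).coeff_mul (BigO.order g)]
  have hshift : ∑ i ∈ Finset.Icc (f.order - 1) (m - g.order),
      (LaurentSeries.derivative K f).coeff i * g.coeff (m - i) =
        ∑ i ∈ Finset.Icc f.order (m + 1 - g.order), i * f.coeff i * g.coeff (m + 1 - i) :=
    Finset.sum_nbij' (· + 1) (· - 1) (by simp; omega) (by simp; omega) (by simp) (by simp)
      fun i _ => by rw [coeff_derivative, add_sub_add_right_eq_sub]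
  have hbound : m - (g.order - 1) = m + 1 - g.order := by ring
  rw [hshift, hbound, Finset.mul_sum, ← Finset.sum_add_distrib]
  refine Finset.sum_congr rfl fun i _ => ?_
  have hindex : m - i + 1 = m + 1 - i := by ring
  rw [coeff_derivative, hindex]
  push_cast
  ring

/-- Differentiation `d/dt` of formal Laurent series, as a derivation. -/
def ddt (K : Type*) [Field K] : IntDerivation (LaurentSeries K) :=
  .ofLeibniz (LaurentSeries.derivative K).toAddMonoidHom derivative_mul

lemma ddt_coeff (f : LaurentSeries K) (m : ℤ) :
    (ddt K f).coeff m = ((m + 1 : ℤ) : K) * f.coeff (m + 1) :=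
  coeff_derivative f m

lemma BigO.ddt (hf : BigO f 0) : BigO (ddt K f) 0 := fun m hm => by
  rw [ddt_coeff]
  rcases (Int.add_one_le_iff.2 hm).eq_or_lt with h | h
  · simp [h]
  · rw [hf _ h, mul_zero]

lemma IsSolT.isToeplitzFlow {x y : ℤ → LaurentSeries K} (h : IsSolT x y) :
    IsToeplitzFlow (ddt K) x y where
  deriv_fst k := by
    ext m
    rw [ddt_coeff, (h k m).1]
  deriv_snd k := by
    ext m
    rw [ddt_coeff, (h k m).2]

/-- The deformed parameters `u(t)`: the constants `u_i`, with `t` added to `u₁` and `u₋₁`. -/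
def deformedParam (u : ℤ → K) (i : ℤ) : LaurentSeries K :=
  HahnSeries.C (u i) + if i = 1 ∨ i = -1 then HahnSeries.single 1 1 else 0

lemma ddt_deformedParam (u : ℤ → K) (i : ℤ) :
    ddt K (deformedParam u i) = if i = 1 ∨ i = -1 then 1 else 0 := by
  have hconst : ddt K (HahnSeries.C (u i) : LaurentSeries K) = 0 := by
    ext m
    rw [ddt_coeff, HahnSeries.C_apply, HahnSeries.coeff_single]
    rcases eq_or_ne (m + 1) 0 with hm | hm <;> simp [hm]
  have ht : ddt K (HahnSeries.single (1 : ℤ) (1 : K)) = 1 := by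
    ext m
    rw [ddt_coeff, HahnSeries.coeff_single, HahnSeries.coeff_one]
    rcases eq_or_ne m 0 with rfl | hm
    · simp
    · simp [hm]
  rw [deformedParam, map_add, hconst, zero_add]
  split_ifs
  exacts [ht, map_zero _]

lemma BigO.single (m : ℤ) (c : K) : BigO (HahnSeries.single m c) m :=
  fun _ hi => HahnSeries.coeff_single_of_ne hi.ne

lemma BigO.deformedParam (u : ℤ → K) (i : ℤ) : BigO (deformedParam u i) 0 := by
  refine (BigO.single 0 (u i)).add ?_
  split_ifs
  exacts [(BigO.single 1 1).mono zero_le_one, fun _ _ => rfl]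

end LaurentOrder

section Regularity

variable {K : Type*} [Field K] {D : IntDerivation (LaurentSeries K)}
  {x y : ℤ → LaurentSeries K} {w : (ℤ → LaurentSeries K) × (ℤ → LaurentSeries K)} {k : ℤ}

/-- The derivation creates no pole. Besides `d/dt` this covers `-d/dt`, which drives the reflected
flow. -/
def PreservesRegular (D : IntDerivation (LaurentSeries K)) : Prop :=
  ∀ f, BigO f 0 → BigO (D f) 0

lemma ddt_preservesRegular : PreservesRegular (ddt K) := fun _ => BigO.ddt

lemma PreservesRegular.neg (hD : PreservesRegular D) : PreservesRegular (-D) :=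
  fun f hf => (regularSubring K).neg_mem (hD f hf)

/-- The flow `(x, y)` and the pair `w` along it have no pole at the site `k`. -/
structure IsRegularAt (x y : ℤ → LaurentSeries K)
    (w : (ℤ → LaurentSeries K) × (ℤ → LaurentSeries K)) (k : ℤ) : Prop where
  fst : BigO (x k) 0
  snd : BigO (y k) 0
  tangent_fst : BigO (w.1 k) 0
  tangent_snd : BigO (w.2 k) 0

namespace IsRegularAt

lemma swap (h : IsRegularAt x y w k) : IsRegularAt y x w.swap k :=
  ⟨h.snd, h.fst, h.tangent_snd, h.tangent_fst⟩

lemma reflect (h : IsRegularAt x y w (-k)) :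
    IsRegularAt (reflect x) (reflect y) (reflect w.1, reflect w.2) k :=
  ⟨h.fst, h.snd, h.tangent_fst, h.tangent_snd⟩

lemma bigO_one_sub_mul (h : IsRegularAt x y w k) : BigO (1 - x k * y k) 0 :=
  BigO.one.sub (h.fst.mul h.snd)

lemma coeff_zero_one_sub_mul (h : IsRegularAt x y w k) :
    (1 - x k * y k).coeff 0 = 1 - (x k).coeff 0 * (y k).coeff 0 := by
  have hmul : (x k * y k).coeff 0 = _ := h.fst.coeff_mul_leading h.snd
  rw [HahnSeries.coeff_sub, hmul, HahnSeries.coeff_one, if_pos rfl]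

lemma bigO_pairing (h : IsRegularAt x y w k) : BigO (y k * w.1 k - x k * w.2 k) 0 :=
  (h.snd.mul h.tangent_fst).sub (h.fst.mul h.tangent_snd)

lemma coeff_zero_pairing (h : IsRegularAt x y w k) :
    (y k * w.1 k - x k * w.2 k).coeff 0 =
      (y k).coeff 0 * (w.1 k).coeff 0 - (x k).coeff 0 * (w.2 k).coeff 0 := by
  have hfst : (y k * w.1 k).coeff 0 = _ := h.snd.coeff_mul_leading h.tangent_fst
  have hsnd : (x k * w.2 k).coeff 0 = _ := h.fst.coeff_mul_leading h.tangent_snd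
  rw [HahnSeries.coeff_sub, hfst, hsnd]

end IsRegularAt

namespace IsTangentFlow

lemma exists_mul_succ_eq (h : IsTangentFlow D x y w) (hD : PreservesRegular D)
    (hpred : IsRegularAt x y w (k - 1)) (hk : IsRegularAt x y w k) :
    ∃ r, BigO r 0 ∧
      (1 - x k * y k) * w.1 (k + 1) = r + x (k + 1) * (y k * w.1 k - x k * w.2 k) := by
  refine ⟨(1 - x k * y k) * w.1 (k - 1) + D (w.1 k) - x (k - 1) * (y k * w.1 k - x k * w.2 k),
    ?_, by linear_combination -h.deriv_fst k⟩
  have hflux : BigO ((1 - x k * y k) * w.1 (k - 1)) 0 := hk.bigO_one_sub_mul.mul hpred.tangent_fst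
  exact (hflux.add (hD _ hk.tangent_fst)).sub (hpred.fst.mul hk.bigO_pairing)

lemma bigO_mul_succ (h : IsTangentFlow D x y w) (hD : PreservesRegular D)
    (hpred : IsRegularAt x y w (k - 1)) (hk : IsRegularAt x y w k) {a : ℤ} (ha : a ≤ 0)
    (hx : BigO (x (k + 1)) a) : BigO ((1 - x k * y k) * w.1 (k + 1)) a := by
  obtain ⟨r, hr, heq⟩ := h.exists_mul_succ_eq hD hpred hk
  have hmul := hx.mul hk.bigO_pairing
  rw [add_zero] at hmul
  exact heq ▸ (hr.mono ha).add hmul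

lemma coeff_mul_succ (h : IsTangentFlow D x y w) (hD : PreservesRegular D)
    (hpred : IsRegularAt x y w (k - 1)) (hk : IsRegularAt x y w k)
    (hx : BigO (x (k + 1)) (-1)) :
    ((1 - x k * y k) * w.1 (k + 1)).coeff (-1) = (x (k + 1)).coeff (-1) *
      ((y k).coeff 0 * (w.1 k).coeff 0 - (x k).coeff 0 * (w.2 k).coeff 0) := by
  obtain ⟨r, hr, heq⟩ := h.exists_mul_succ_eq hD hpred hk
  have hmul : (x (k + 1) * (y k * w.1 k - x k * w.2 k)).coeff (-1) = _ :=
    hx.coeff_mul_leading hk.bigO_pairing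
  rw [heq, HahnSeries.coeff_add, hr _ (by norm_num), zero_add, hmul, hk.coeff_zero_pairing]

lemma coeff_mul_pred (h : IsTangentFlow D x y w) (hD : PreservesRegular D)
    (hk : IsRegularAt x y w k) (hsucc : IsRegularAt x y w (k + 1))
    (hx : BigO (x (k - 1)) (-1)) :
    ((1 - x k * y k) * w.1 (k - 1)).coeff (-1) = (x (k - 1)).coeff (-1) *
      ((y k).coeff 0 * (w.1 k).coeff 0 - (x k).coeff 0 * (w.2 k).coeff 0) := by
  have hpred : -(-k - 1) = k + 1 := by ring
  have hsuccneg : -(-k + 1) = k - 1 := by ring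
  have hmain := h.reflect.coeff_mul_succ (k := -k) hD.neg
    (IsRegularAt.reflect (hpred.symm ▸ hsucc)) (IsRegularAt.reflect ((neg_neg k).symm ▸ hk))
    (by rwa [reflect_apply, hsuccneg])
  simpa only [reflect_apply, neg_neg, hsuccneg] using hmain

lemma bigO_succ (h : IsTangentFlow D x y w) (hD : PreservesRegular D)
    (hpred : IsRegularAt x y w (k - 1)) (hk : IsRegularAt x y w k)
    (hx : BigO (x (k + 1)) 0) (hv : 1 - (x k).coeff 0 * (y k).coeff 0 ≠ 0) :
    BigO (w.1 (k + 1)) 0 := by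
  rw [← hk.coeff_zero_one_sub_mul] at hv
  exact hk.bigO_one_sub_mul.of_mul_left hv (h.bigO_mul_succ hD hpred hk le_rfl hx)

lemma isRegularAt_of_lt (h : IsTangentFlow D x y w) (hD : PreservesRegular D) {n m : ℤ}
    (hxy : ∀ k < n, BigO (x k) 0 ∧ BigO (y k) 0)
    (hv : ∀ k < n - 1, 1 - (x k).coeff 0 * (y k).coeff 0 ≠ 0)
    (hfar : ∀ k ≤ m, IsRegularAt x y w k) : ∀ k < n, IsRegularAt x y w k := by
  suffices hupto : ∀ j, m ≤ j → ∀ k ≤ j, k < n → IsRegularAt x y w k from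
    fun k hk => hupto (max m k) (le_max_left m k) k (le_max_right m k) hk
  intro j hj
  induction j, hj using Int.leInduction with
  | base => exact fun k hk _ => hfar k hk
  | succ j _ ih =>
    intro k hk hkn
    rcases hk.lt_or_eq with hlt | rfl
    · exact ih k (Int.lt_add_one_iff.1 hlt) hkn
    have hpred := ih (j - 1) (by omega) (by omega)
    have hcur := ih j le_rfl (by omega)
    have hvj := hv j (by omega)
    obtain ⟨hx, hy⟩ := hxy (j + 1) hkn
    exact ⟨hx, hy, h.bigO_succ hD hpred hcur hx hvj,
      h.swap.bigO_succ hD hpred.swap hcur.swap hy (by rwa [mul_comm])⟩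

lemma isRegularAt_of_gt (h : IsTangentFlow D x y w) (hD : PreservesRegular D) {n m : ℤ}
    (hxy : ∀ k, n < k → BigO (x k) 0 ∧ BigO (y k) 0)
    (hv : ∀ k, n + 1 < k → 1 - (x k).coeff 0 * (y k).coeff 0 ≠ 0)
    (hfar : ∀ k, m ≤ k → IsRegularAt x y w k) : ∀ k, n < k → IsRegularAt x y w k := by
  intro k hk
  have hneg := h.reflect.isRegularAt_of_lt (n := -n) (m := -m) hD.neg
    (fun j hj => hxy (-j) (by omega)) (fun j hj => hv (-j) (by omega))
    (fun j hj => (hfar (-j) (by omega)).reflect) (-k) (by omega)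
  simpa only [reflect_reflect, neg_neg] using
    IsRegularAt.reflect (k := k) hneg

end IsTangentFlow

lemma isRegularAt_gammaPair {N : ℕ} {u : ℤ → LaurentSeries K} (hu : ∀ i, BigO (u i) 0)
    (hxy : ∀ l ∈ Set.Icc (k - N) (k + N), BigO (x l) 0 ∧ BigO (y l) 0) :
    IsRegularAt x y (gammaPair N u x y) k := by
  have hx : ∀ l ∈ Set.Icc (k - N) (k + N), x l ∈ regularSubring K := fun l hl => (hxy l hl).1
  have hy : ∀ l ∈ Set.Icc (k - N) (k + N), y l ∈ regularSubring K := fun l hl => (hxy l hl).2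
  have hk : k ∈ Set.Icc (k - N) (k + N) := ⟨by omega, by omega⟩
  exact ⟨hx k hk, hy k hk, GamA_mem hu hx hy, GamB_mem hu hx hy⟩

lemma IsTangentFlow.isRegularAt_gammaPair_of_ne {n : ℤ} {N : ℕ} {u : ℤ → LaurentSeries K}
    (hw : IsTangentFlow (ddt K) x y (gammaPair N u x y)) (hu : ∀ i, BigO (u i) 0)
    (hxy : ∀ k, k ≠ n → BigO (x k) 0 ∧ BigO (y k) 0)
    (hv : ∀ k, 2 ≤ |k - n| → 1 - (x k).coeff 0 * (y k).coeff 0 ≠ 0) :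
    ∀ k, k ≠ n → IsRegularAt x y (gammaPair N u x y) k := by
  intro k hk
  rcases hk.lt_or_gt with hlt | hgt
  · refine hw.isRegularAt_of_lt ddt_preservesRegular (n := n) (m := n - N - 1)
      (fun j hj => hxy j hj.ne) (fun j hj => hv j (le_abs.2 (by omega))) (fun j hj => ?_) k hlt
    exact isRegularAt_gammaPair hu fun l hl => hxy l (by have := hl.2; omega)
  · refine hw.isRegularAt_of_gt ddt_preservesRegular (n := n) (m := n + N + 1)
      (fun j hj => hxy j hj.ne') (fun j hj => hv j (le_abs.2 (by omega))) (fun j hj => ?_) k hgt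
    exact isRegularAt_gammaPair hu fun l hl => hxy l (by have := hl.1; omega)

end Regularity

section PoleAnalysis

variable {K : Type*} [Field K] {n : ℤ} {x y : ℤ → LaurentSeries K} {an1 am1 ap am : K}
  {w : (ℤ → LaurentSeries K) × (ℤ → LaurentSeries K)}

/-- The pair `(x, y)` has a simple pole at the site `n` only, with the singularity confinement
data of the Toeplitz lattice: `an1`, `am1` are the values `a_{n±1}` of `x` at `n ± 1`, and `ap`,
`am` are the logarithmic derivatives `a_±` of `x` there. -/
structure HasSimplePoleAt (n : ℤ) (x y : ℤ → LaurentSeries K) (an1 am1 ap am : K) : Prop where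
  right_ne_zero : an1 ≠ 0
  left_ne_zero : am1 ≠ 0
  sub_ne_zero : am1 - an1 ≠ 0
  regular : ∀ k, k ≠ n → BigO (x k) 0 ∧ BigO (y k) 0
  fst_right : (x (n + 1)).coeff 0 = an1
  fst_left : (x (n - 1)).coeff 0 = am1
  snd_right : (y (n + 1)).coeff 0 = an1⁻¹
  snd_left : (y (n - 1)).coeff 0 = am1⁻¹
  fst_right_deriv : (x (n + 1)).coeff 1 = an1 * ap
  fst_left_deriv : (x (n - 1)).coeff 1 = am1 * am
  snd_right_deriv : (y (n + 1)).coeff 1 = -(ap / am1)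
  snd_left_deriv : (y (n - 1)).coeff 1 = -(am / an1)
  bigO_fst : BigO (x n) (-1)
  bigO_snd : BigO (y n) (-1)
  residue_fst : (x n).coeff (-1) = am1 * an1 / (am1 - an1)
  residue_snd : (y n).coeff (-1) = -1 / (am1 - an1)

lemma bigO_one_sub_mul_of_coeff_zero {f g : LaurentSeries K} (hf : BigO f 0) (hg : BigO g 0)
    (h : f.coeff 0 * g.coeff 0 = 1) : BigO (1 - f * g) 1 := by
  intro m hm
  have hm' : m ≤ 0 := by omega
  rcases hm'.eq_or_lt with rfl | hneg
  · have hmul : (f * g).coeff 0 = _ := hf.coeff_mul_leading hg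
    rw [HahnSeries.coeff_sub, hmul, h, HahnSeries.coeff_one, if_pos rfl, sub_self]
  · exact BigO.one.sub (hf.mul hg) m hneg

lemma coeff_one_one_sub_mul {f g : LaurentSeries K} (hf : BigO f 0) (hg : BigO g 0) :
    (1 - f * g).coeff 1 = -(f.coeff 0 * g.coeff 1 + f.coeff 1 * g.coeff 0) := by
  have hmul : (f * g).coeff 1 = _ := hf.coeff_mul_leading_add_one hg
  rw [HahnSeries.coeff_sub, hmul, HahnSeries.coeff_one, if_neg one_ne_zero, zero_sub]
  simp only [zero_add]

namespace HasSimplePoleAt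

lemma swap (h : HasSimplePoleAt n x y an1 am1 ap am) :
    HasSimplePoleAt n y x an1⁻¹ am1⁻¹ (-(ap * an1 / am1)) (-(am * am1 / an1)) := by
  obtain ⟨hr, hl, hd, -⟩ := id h
  have hd' : an1 - am1 ≠ 0 := by rwa [← neg_sub, neg_ne_zero]
  have hinv : am1⁻¹ - an1⁻¹ = (an1 - am1) / (am1 * an1) := by field_simp
  exact
    { right_ne_zero := inv_ne_zero hr
      left_ne_zero := inv_ne_zero hl
      sub_ne_zero := hinv ▸ div_ne_zero hd' (mul_ne_zero hl hr)
      regular := fun k hk => (h.regular k hk).symm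
      fst_right := h.snd_right
      fst_left := h.snd_left
      snd_right := by rw [h.fst_right, inv_inv]
      snd_left := by rw [h.fst_left, inv_inv]
      fst_right_deriv := by rw [h.snd_right_deriv]; field_simp
      fst_left_deriv := by rw [h.snd_left_deriv]; field_simp
      snd_right_deriv := by rw [h.fst_right_deriv]; field_simp
      snd_left_deriv := by rw [h.fst_left_deriv]; field_simp
      bigO_fst := h.bigO_snd
      bigO_snd := h.bigO_fst
      residue_fst := by rw [h.residue_snd, hinv]; grind
      residue_snd := by rw [h.residue_fst, hinv]; grind }

lemma swap_left_ne_zero (h : HasSimplePoleAt n x y an1 am1 ap am) (ham : am ≠ 0) :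
    -(am * am1 / an1) ≠ 0 :=
  neg_ne_zero.2 (div_ne_zero (mul_ne_zero ham h.left_ne_zero) h.right_ne_zero)

lemma bigO_one_sub_mul_left (h : HasSimplePoleAt n x y an1 am1 ap am) :
    BigO (1 - x (n - 1) * y (n - 1)) 1 := by
  obtain ⟨hx, hy⟩ := h.regular (n - 1) (by omega)
  refine bigO_one_sub_mul_of_coeff_zero hx hy ?_
  rw [h.fst_left, h.snd_left, mul_inv_cancel₀ h.left_ne_zero]

lemma bigO_one_sub_mul_right (h : HasSimplePoleAt n x y an1 am1 ap am) :
    BigO (1 - x (n + 1) * y (n + 1)) 1 := by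
  obtain ⟨hx, hy⟩ := h.regular (n + 1) (by omega)
  refine bigO_one_sub_mul_of_coeff_zero hx hy ?_
  rw [h.fst_right, h.snd_right, mul_inv_cancel₀ h.right_ne_zero]

lemma coeff_one_one_sub_mul_left (h : HasSimplePoleAt n x y an1 am1 ap am) :
    (1 - x (n - 1) * y (n - 1)).coeff 1 = am * (am1 - an1) / an1 := by
  obtain ⟨hx, hy⟩ := h.regular (n - 1) (by omega)
  have hr := h.right_ne_zero
  have hl := h.left_ne_zero
  rw [coeff_one_one_sub_mul hx hy, h.fst_left, h.snd_left, h.fst_left_deriv, h.snd_left_deriv]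
  field_simp
  ring

lemma coeff_one_one_sub_mul_right (h : HasSimplePoleAt n x y an1 am1 ap am) :
    (1 - x (n + 1) * y (n + 1)).coeff 1 = ap * (an1 - am1) / am1 := by
  obtain ⟨hx, hy⟩ := h.regular (n + 1) (by omega)
  have hr := h.right_ne_zero
  have hl := h.left_ne_zero
  rw [coeff_one_one_sub_mul hx hy, h.fst_right, h.snd_right, h.fst_right_deriv, h.snd_right_deriv]
  field_simp
  ring

lemma bigO_one_sub_mul (h : HasSimplePoleAt n x y an1 am1 ap am) : BigO (1 - x n * y n) (-2) :=
  (BigO.one.mono (by norm_num)).sub (h.bigO_fst.mul h.bigO_snd)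

lemma bigO_pairing (h : HasSimplePoleAt n x y an1 am1 ap am) (hfst : BigO (w.1 n) (-2))
    (hsnd : BigO (w.2 n) (-2)) : BigO (y n * w.1 n - x n * w.2 n) (-3) :=
  (h.bigO_snd.mul hfst).sub (h.bigO_fst.mul hsnd)

lemma coeff_neg_three_pairing (h : HasSimplePoleAt n x y an1 am1 ap am)
    (hfst : BigO (w.1 n) (-2)) (hsnd : BigO (w.2 n) (-2)) :
    (y n * w.1 n - x n * w.2 n).coeff (-3) =
      (y n).coeff (-1) * (w.1 n).coeff (-2) - (x n).coeff (-1) * (w.2 n).coeff (-2) := by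
  have hyw : (y n * w.1 n).coeff (-3) = _ := h.bigO_snd.coeff_mul_leading hfst
  have hxw : (x n * w.2 n).coeff (-3) = _ := h.bigO_fst.coeff_mul_leading hsnd
  rw [HahnSeries.coeff_sub, hyw, hxw]

lemma coeff_neg_two_pairing (h : HasSimplePoleAt n x y an1 am1 ap am)
    (hfst : BigO (w.1 n) (-2)) (hsnd : BigO (w.2 n) (-2)) :
    (y n * w.1 n - x n * w.2 n).coeff (-2) =
      (y n).coeff (-1) * (w.1 n).coeff (-1) + (y n).coeff 0 * (w.1 n).coeff (-2) -
        ((x n).coeff (-1) * (w.2 n).coeff (-1) + (x n).coeff 0 * (w.2 n).coeff (-2)) := by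
  have hyw : (y n * w.1 n).coeff (-2) = _ := h.bigO_snd.coeff_mul_leading_add_one hfst
  have hxw : (x n * w.2 n).coeff (-2) = _ := h.bigO_fst.coeff_mul_leading_add_one hsnd
  rw [HahnSeries.coeff_sub, hyw, hxw]
  rfl

lemma sub_mul_residue_fst (h : HasSimplePoleAt n x y an1 am1 ap am) :
    (an1 - am1) * (x n).coeff (-1) = -(am1 * an1) := by
  have hd := h.sub_ne_zero
  rw [h.residue_fst]
  field_simp
  ring

lemma sub_mul_residue_snd (h : HasSimplePoleAt n x y an1 am1 ap am) :
    (an1 - am1) * (y n).coeff (-1) = 1 := by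
  have hd := h.sub_ne_zero
  rw [h.residue_snd]
  field_simp
  ring

end HasSimplePoleAt

namespace IsTangentFlow

variable (hw : IsTangentFlow (ddt K) x y w) (hpole : HasSimplePoleAt n x y an1 am1 ap am)
  (hreg : ∀ k, k ≠ n → IsRegularAt x y w k)

include hw hpole hreg

lemma bigO_pole_fst (ham : am ≠ 0) : BigO (w.1 n) (-2) := by
  have hcoeff : (1 - x (n - 1) * y (n - 1)).coeff 1 ≠ 0 := by
    rw [hpole.coeff_one_one_sub_mul_left]
    exact div_ne_zero (mul_ne_zero ham hpole.sub_ne_zero) hpole.right_ne_zero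
  have hmul := hw.bigO_mul_succ ddt_preservesRegular (hreg (n - 1 - 1) (by omega))
    (hreg (n - 1) (by omega)) (a := -1) (by norm_num)
    (by rw [sub_add_cancel]; exact hpole.bigO_fst)
  rw [sub_add_cancel] at hmul
  exact hpole.bigO_one_sub_mul_left.of_mul_left hcoeff hmul

lemma bigO_pole_snd (ham : am ≠ 0) : BigO (w.2 n) (-2) :=
  hw.swap.bigO_pole_fst hpole.swap (fun k hk => (hreg k hk).swap) (hpole.swap_left_ne_zero ham)

lemma leadingCoeff_mul_left (hord : BigO (w.1 n) (-2)) :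
    am * (am1 - an1) / an1 * (w.1 n).coeff (-2) = am1 * an1 / (am1 - an1) *
      (am1⁻¹ * (w.1 (n - 1)).coeff 0 - am1 * (w.2 (n - 1)).coeff 0) := by
  have hcoeff := hw.coeff_mul_succ ddt_preservesRegular (hreg (n - 1 - 1) (by omega))
    (hreg (n - 1) (by omega)) (by rw [sub_add_cancel]; exact hpole.bigO_fst)
  have hlead : ((1 - x (n - 1) * y (n - 1)) * w.1 n).coeff (-1) = _ :=
    hpole.bigO_one_sub_mul_left.coeff_mul_leading hord
  rwa [sub_add_cancel, hlead, hpole.coeff_one_one_sub_mul_left, hpole.residue_fst, hpole.fst_left,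
    hpole.snd_left] at hcoeff

lemma leadingCoeff_mul_right (hord : BigO (w.1 n) (-2)) :
    ap * (an1 - am1) / am1 * (w.1 n).coeff (-2) = am1 * an1 / (am1 - an1) *
      (an1⁻¹ * (w.1 (n + 1)).coeff 0 - an1 * (w.2 (n + 1)).coeff 0) := by
  have hcoeff := hw.coeff_mul_pred ddt_preservesRegular (hreg (n + 1) (by omega))
    (hreg (n + 1 + 1) (by omega)) (by rw [add_sub_cancel_right]; exact hpole.bigO_fst)
  have hlead : ((1 - x (n + 1) * y (n + 1)) * w.1 n).coeff (-1) = _ :=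
    hpole.bigO_one_sub_mul_right.coeff_mul_leading hord
  rwa [add_sub_cancel_right, hlead, hpole.coeff_one_one_sub_mul_right, hpole.residue_fst,
    hpole.fst_right, hpole.snd_right] at hcoeff

lemma leadingCoeff_fst (ham : am ≠ 0) :
    (w.1 n).coeff (-2) = an1 ^ 2 / (am * (am1 - an1) ^ 2) *
      ((w.1 (n - 1)).coeff 0 - am1 ^ 2 * (w.2 (n - 1)).coeff 0) := by
  have hleft := hw.leadingCoeff_mul_left hpole hreg (hw.bigO_pole_fst hpole hreg ham)
  obtain ⟨hr, hl, hd, -⟩ := hpole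
  apply mul_left_cancel₀ (div_ne_zero (mul_ne_zero ham hd) hr)
  rw [hleft]
  field_simp

lemma leadingCoeff_snd (ham : am ≠ 0) :
    (w.2 n).coeff (-2) = an1 * am1 / (am * (am1 - an1) ^ 2) *
      ((w.1 (n - 1)).coeff 0 / am1 ^ 2 - (w.2 (n - 1)).coeff 0) := by
  obtain ⟨hr, hl, hd, -⟩ := id hpole
  have hswap : (w.2 n).coeff (-2) = _ :=
    hw.swap.leadingCoeff_fst hpole.swap (fun k hk => (hreg k hk).swap)
      (hpole.swap_left_ne_zero ham)
  have hinv : (am1⁻¹ - an1⁻¹) ^ 2 = (am1 - an1) ^ 2 / (am1 * an1) ^ 2 := by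
    field_simp
    ring
  rw [hswap, hinv, Prod.fst_swap, Prod.snd_swap]
  field_simp
  ring

lemma neighbour_relation (ham : am ≠ 0) :
    am * ((w.2 (n + 1)).coeff 0 - (w.1 (n + 1)).coeff 0 / an1 ^ 2) =
      ap * ((w.1 (n - 1)).coeff 0 / am1 ^ 2 - (w.2 (n - 1)).coeff 0) := by
  have hright := hw.leadingCoeff_mul_right hpole hreg (hw.bigO_pole_fst hpole hreg ham)
  rw [hw.leadingCoeff_fst hpole hreg ham] at hright
  obtain ⟨hr, hl, hd, -⟩ := hpole
  field_simp at hright ⊢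
  grind

lemma coeff_neg_two_deriv_fst (hfst : BigO (w.1 n) (-2)) (hsnd : BigO (w.2 n) (-2)) :
    -(w.1 n).coeff (-1) =
      (1 - x n * y n).coeff (-2) * ((w.1 (n + 1)).coeff 0 - (w.1 (n - 1)).coeff 0) -
      ((an1 - am1) * (y n * w.1 n - x n * w.2 n).coeff (-2) +
        (x (n + 1) - x (n - 1)).coeff 1 * (y n * w.1 n - x n * w.2 n).coeff (-3)) := by
  have hplus := hreg (n + 1) (by omega)
  have hminus := hreg (n - 1) (by omega)
  have hflux : ((1 - x n * y n) * (w.1 (n + 1) - w.1 (n - 1))).coeff (-2) = _ :=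
    hpole.bigO_one_sub_mul.coeff_mul_leading (hplus.tangent_fst.sub hminus.tangent_fst)
  have hdrift : ((x (n + 1) - x (n - 1)) * (y n * w.1 n - x n * w.2 n)).coeff (-2) =
      (x (n + 1) - x (n - 1)).coeff 0 * (y n * w.1 n - x n * w.2 n).coeff (-2) +
        (x (n + 1) - x (n - 1)).coeff 1 * (y n * w.1 n - x n * w.2 n).coeff (-3) :=
    (hplus.fst.sub hminus.fst).coeff_mul_leading_add_one (hpole.bigO_pairing hfst hsnd)
  have hjump : (x (n + 1) - x (n - 1)).coeff 0 = an1 - am1 := by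
    rw [HahnSeries.coeff_sub, hpole.fst_right, hpole.fst_left]
  have hdiff : (w.1 (n + 1) - w.1 (n - 1)).coeff 0 =
      (w.1 (n + 1)).coeff 0 - (w.1 (n - 1)).coeff 0 := HahnSeries.coeff_sub
  have hderiv : (ddt K (w.1 n)).coeff (-2) = -(w.1 n).coeff (-1) := by
    rw [ddt_coeff]
    norm_num
  rw [← hderiv, hw.deriv_fst n, HahnSeries.coeff_sub, hflux, hdrift, hjump, hdiff]

/-- In the coefficient of `t⁻²` at the site `n` the residue of `w.1 n` cancels, leaving that of
`w.2 n`. -/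
lemma residue_snd_eq (hfst : BigO (w.1 n) (-2)) (hsnd : BigO (w.2 n) (-2)) :
    am1 * an1 * (w.2 n).coeff (-1) =
      (1 - x n * y n).coeff (-2) * ((w.1 (n + 1)).coeff 0 - (w.1 (n - 1)).coeff 0) -
      (an1 - am1) *
        ((y n).coeff 0 * (w.1 n).coeff (-2) - (x n).coeff 0 * (w.2 n).coeff (-2)) -
      (x (n + 1) - x (n - 1)).coeff 1 *
        ((y n).coeff (-1) * (w.1 n).coeff (-2) - (x n).coeff (-1) * (w.2 n).coeff (-2)) := by
  have hcoeff := hw.coeff_neg_two_deriv_fst hpole hreg hfst hsnd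
  rw [hpole.coeff_neg_two_pairing hfst hsnd, hpole.coeff_neg_three_pairing hfst hsnd] at hcoeff
  linear_combination hcoeff - (w.1 n).coeff (-1) * hpole.sub_mul_residue_snd +
    (w.2 n).coeff (-1) * hpole.sub_mul_residue_fst

lemma exists_residue_snd_eq (ham : am ≠ 0) :
    ∃ c₁ c₂ c₃ : K, (w.2 n).coeff (-1) = c₁ * (w.1 (n + 1)).coeff 0 +
      c₂ * (w.1 (n - 1)).coeff 0 + c₃ * (w.2 (n - 1)).coeff 0 := by
  have hne : am1 * an1 ≠ 0 := mul_ne_zero hpole.left_ne_zero hpole.right_ne_zero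
  have hproportional : (w.1 (n - 1)).coeff 0 - am1 ^ 2 * (w.2 (n - 1)).coeff 0 =
      am1 ^ 2 * ((w.1 (n - 1)).coeff 0 / am1 ^ 2 - (w.2 (n - 1)).coeff 0) := by
    rw [mul_sub, mul_div_cancel₀ _ (pow_ne_zero 2 hpole.left_ne_zero)]
  have hres := hw.residue_snd_eq hpole hreg (hw.bigO_pole_fst hpole hreg ham)
    (hw.bigO_pole_snd hpole hreg ham)
  rw [hw.leadingCoeff_fst hpole hreg ham, hw.leadingCoeff_snd hpole hreg ham, hproportional,
    ← eq_inv_mul_iff_mul_eq₀ hne] at hres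
  let v : K := (1 - x n * y n).coeff (-2)
  let r (i : ℤ) : K := an1 ^ 2 / (am * (am1 - an1) ^ 2) * am1 ^ 2 * (y n).coeff i -
    an1 * am1 / (am * (am1 - an1) ^ 2) * (x n).coeff i
  let s : K := (an1 - am1) * r 0 + (x (n + 1) - x (n - 1)).coeff 1 * r (-1)
  refine ⟨(am1 * an1)⁻¹ * v, -(am1 * an1)⁻¹ * (v + s / am1 ^ 2), (am1 * an1)⁻¹ * s, ?_⟩
  rw [hres]
  ring

lemma exists_residue_fst_eq (ham : am ≠ 0) :
    ∃ c₁ c₂ c₃ : K, (w.1 n).coeff (-1) = c₁ * (w.2 (n + 1)).coeff 0 +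
      c₂ * (w.2 (n - 1)).coeff 0 + c₃ * (w.1 (n - 1)).coeff 0 :=
  hw.swap.exists_residue_snd_eq hpole.swap (fun k hk => (hreg k hk).swap)
    (hpole.swap_left_ne_zero ham)

lemma exists_residues_eq (ham : am ≠ 0) :
    ∃ c1 c2 c3 c4 d1 d2 d3 d4 : K,
      (w.1 n).coeff (-1) = c1 * (w.1 (n + 1)).coeff 0 + c2 * (w.1 (n - 1)).coeff 0 +
        c3 * (w.2 (n + 1)).coeff 0 + c4 * (w.2 (n - 1)).coeff 0 ∧
      (w.2 n).coeff (-1) = d1 * (w.1 (n + 1)).coeff 0 + d2 * (w.1 (n - 1)).coeff 0 +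
        d3 * (w.2 (n + 1)).coeff 0 + d4 * (w.2 (n - 1)).coeff 0 := by
  obtain ⟨c3, c4, c2, hfst⟩ := hw.exists_residue_fst_eq hpole hreg ham
  obtain ⟨d1, d2, d4, hsnd⟩ := hw.exists_residue_snd_eq hpole hreg ham
  exact ⟨0, c2, c3, c4, d1, d2, 0, d4, by rw [hfst]; ring, by rw [hsnd]; ring⟩

end IsTangentFlow

end PoleAnalysis

end SingConf

theorem statement6_general {K : Type*} [Field K] {n : ℤ} {N : ℕ} (hN : 1 ≤ N) (u : ℤ → K)
    {x y : ℤ → LaurentSeries K} (hsol : IsSolT x y) {an1 am1 ap am : K}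
    (hpole : HasSimplePoleAt n x y an1 am1 ap am) (ham : am ≠ 0)
    (hv : ∀ k, 2 ≤ |k - n| → 1 - (x k).coeff 0 * (y k).coeff 0 ≠ 0)
    {G Gt : ℤ → LaurentSeries K} (hG : G = GamA N (deformedParam u) x y)
    (hGt : Gt = GamB N (deformedParam u) x y) :
    ((∀ k, k ≠ n → BigO (G k) 0 ∧ BigO (Gt k) 0) ∧
      BigO (G n) (-2) ∧ BigO (Gt n) (-2) ∧
      (G n).coeff (-2) = an1 ^ 2 / (am * (am1 - an1) ^ 2) *
        ((G (n - 1)).coeff 0 - am1 ^ 2 * (Gt (n - 1)).coeff 0) ∧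
      (Gt n).coeff (-2) = an1 * am1 / (am * (am1 - an1) ^ 2) *
        ((G (n - 1)).coeff 0 / am1 ^ 2 - (Gt (n - 1)).coeff 0) ∧
      (∃ c1 c2 c3 c4 d1 d2 d3 d4 : K,
        (G n).coeff (-1) = c1 * (G (n + 1)).coeff 0 + c2 * (G (n - 1)).coeff 0 +
          c3 * (Gt (n + 1)).coeff 0 + c4 * (Gt (n - 1)).coeff 0 ∧
        (Gt n).coeff (-1) = d1 * (G (n + 1)).coeff 0 + d2 * (G (n - 1)).coeff 0 +
          d3 * (Gt (n + 1)).coeff 0 + d4 * (Gt (n - 1)).coeff 0)) ∧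
    am * ((Gt (n + 1)).coeff 0 - (G (n + 1)).coeff 0 / an1 ^ 2) =
      ap * ((G (n - 1)).coeff 0 / am1 ^ 2 - (Gt (n - 1)).coeff 0) := by
  subst hG hGt
  have hw := hsol.isToeplitzFlow.isTangentFlow_gammaPair hN (ddt_deformedParam u)
  have hreg := hw.isRegularAt_gammaPair_of_ne (BigO.deformedParam u) hpole.regular hv
  exact ⟨⟨fun k hk => ⟨(hreg k hk).tangent_fst, (hreg k hk).tangent_snd⟩,
    hw.bigO_pole_fst hpole hreg ham, hw.bigO_pole_snd hpole hreg ham,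
    hw.leadingCoeff_fst hpole hreg ham, hw.leadingCoeff_snd hpole hreg ham,
    hw.exists_residues_eq hpole hreg ham⟩, hw.neighbour_relation hpole hreg ham⟩

/-- tangency, general case. With `(x(t), y(t))` a formal Laurent solution
of the first Toeplitz vector field having the stated pole structure and leading data
(`a_{n±1}` = `an1`/`am1`, `a_±` = `ap`/`am`), and `Γ_k(t), Γ̃_k(t)` as in the context:
(i) for `k ≠ n` the series `Γ_k(t), Γ̃_k(t)` have no pole;
(ii) `Γ_n(t)` and `Γ̃_n(t)` have (at worst) a double pole with the stated leading
coefficients, and the residues are `F`-linear combinations of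
`Γ_{n±1}^{(0)}, Γ̃_{n±1}^{(0)}`;
(iii) `a₋(Γ̃_{n+1}^{(0)} - Γ_{n+1}^{(0)}/a_{n+1}²) = a₊(Γ_{n-1}^{(0)}/a_{n-1}² - Γ̃_{n-1}^{(0)})`. -/
theorem statement6 (hN : 1 ≤ N)
    (u : ℤ → F) (huN : u (N : ℤ) ≠ 0) (huN' : u (-(N : ℤ)) ≠ 0)
    (x y : ℤ → LaurentSeries F) (hsol : IsSolT x y)
    (an1 am1 ap am : F)
    (hnopole : ∀ k, k ≠ n → BigO (x k) 0 ∧ BigO (y k) 0)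
    (hv : ∀ k, 2 ≤ |k - n| → 1 - (x k).coeff 0 * (y k).coeff 0 ≠ 0)
    (hx1 : (x (n + 1)).coeff 0 = an1) (hx1' : (x (n - 1)).coeff 0 = am1)
    (hy1 : (y (n + 1)).coeff 0 = an1⁻¹) (hy1' : (y (n - 1)).coeff 0 = am1⁻¹)
    (hx1t : (x (n + 1)).coeff 1 = an1 * ap) (hx1t' : (x (n - 1)).coeff 1 = am1 * am)
    (hy1t : (y (n + 1)).coeff 1 = -(ap / am1)) (hy1t' : (y (n - 1)).coeff 1 = -(am / an1))
    (hreg : an1 * am1 * (an1 - am1) ≠ 0) (hreg' : ap * am ≠ 0)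
    (hxn : BigO (x n) (-1)) (hyn : BigO (y n) (-1))
    (hxnc : (x n).coeff (-1) = am1 * an1 / (am1 - an1))
    (hync : (y n).coeff (-1) = -1 / (am1 - an1))
    (ut : ℤ → LaurentSeries F)
    (hut : ∀ i : ℤ, ut i = HahnSeries.C (u i) +
      (if i = 1 ∨ i = -1 then HahnSeries.single (1 : ℤ) (1 : F) else 0))
    (G Gt : ℤ → LaurentSeries F)
    (hG : ∀ k, G k = GamA N ut x y k) (hGt : ∀ k, Gt k = GamB N ut x y k) :
    -- (i): no poles away from n
    ((∀ k, k ≠ n → BigO (G k) 0 ∧ BigO (Gt k) 0) ∧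
    -- (ii): double pole at n, with explicit leading coefficient and residue a linear
    -- combination of Γ_{n±1}^{(0)}, Γ̃_{n±1}^{(0)}
      BigO (G n) (-2) ∧ BigO (Gt n) (-2) ∧
      (G n).coeff (-2) = an1 ^ 2 / (am * (am1 - an1) ^ 2) *
        ((G (n - 1)).coeff 0 - am1 ^ 2 * (Gt (n - 1)).coeff 0) ∧
      (Gt n).coeff (-2) = an1 * am1 / (am * (am1 - an1) ^ 2) *
        ((G (n - 1)).coeff 0 / am1 ^ 2 - (Gt (n - 1)).coeff 0) ∧
      (∃ c1 c2 c3 c4 d1 d2 d3 d4 : F,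
        (G n).coeff (-1) = c1 * (G (n + 1)).coeff 0 + c2 * (G (n - 1)).coeff 0 +
          c3 * (Gt (n + 1)).coeff 0 + c4 * (Gt (n - 1)).coeff 0 ∧
        (Gt n).coeff (-1) = d1 * (G (n + 1)).coeff 0 + d2 * (G (n - 1)).coeff 0 +
          d3 * (Gt (n + 1)).coeff 0 + d4 * (Gt (n - 1)).coeff 0)) ∧
    -- (iii): the compatibility relation
    am * ((Gt (n + 1)).coeff 0 - (G (n + 1)).coeff 0 / an1 ^ 2) =
      ap * ((G (n - 1)).coeff 0 / am1 ^ 2 - (Gt (n - 1)).coeff 0) := by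
  obtain ⟨hneighbours, hsub⟩ := mul_ne_zero_iff.1 hreg
  obtain ⟨hright, hleft⟩ := mul_ne_zero_iff.1 hneighbours
  rw [← neg_sub, neg_ne_zero] at hsub
  obtain rfl : ut = deformedParam u := funext hut
  exact statement6_general hN u hsol
    ⟨hright, hleft, hsub, hnopole, hx1, hx1', hy1, hy1', hx1t, hx1t', hy1t, hy1t', hxn, hyn, hxnc,
      hync⟩
    (right_ne_zero_of_mul hreg') hv (funext hG) (funext hGt)
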